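/- Fix p ≥ 1, x ∈ ℝ^p, and ξ > 0. Let H ⊂ ℝ^p × (p×p symmetric real matrices) be the set of pairs (μ,Σ) with Σ positive semidefinite and all eigenvalues of Σ at least ξ. Then the function (μ,Σ) ↦ N(x|μ,Σ) on H vanishes at infinity: for every ε > 0 there exists R > 0 such that every (μ,Σ) ∈ H with ‖μ‖ + ‖Σ‖ ≥ R satisfies N(x|μ,Σ) ≤ ε. -/

import Mathlib

open MeasureTheory Filter Real

/-- The multivariate Gaussian density
`N(x|μ,Σ) = (2π)^{-p/2} det(Σ)^{-1/2} exp(−(x−μ)ᵀ Σ⁻¹ (x−μ)/2)`. -/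
noncomputable def gaussDensity {p : ℕ} (x μ : Fin p → ℝ) (S : Matrix (Fin p) (Fin p) ℝ) : ℝ :=
  (2 * π) ^ (-(p : ℝ) / 2) * S.det ^ (-(1 : ℝ) / 2) *
    Real.exp (-(dotProduct (x - μ) (S⁻¹.mulVec (x - μ))) / 2)

/-- The Frobenius norm on `p × p` real matrices (a fixed norm on matrices). -/
noncomputable def matNorm {p : ℕ} (S : Matrix (Fin p) (Fin p) ℝ) : ℝ :=
  Real.sqrt (∑ a, ∑ b, S a b ^ 2)

/-!
With `t = tr Σ` and `d = |x - μ|`, the Cauchy-Schwarz inequality for the form `Σ` gives both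
`‖Σ‖ ≤ t` and `d² ≤ t (x - μ)ᵀ Σ⁻¹ (x - μ)`, while the eigenvalue bound gives `ξ^{p-1} t ≤ p det Σ`.
Since `t e^q ≥ t (1 + q) ≥ t + d²` for `q = (x - μ)ᵀ Σ⁻¹ (x - μ)`, the square of the density is at
most a constant over `t + d²`, a quantity that tends to infinity with `‖μ‖ + ‖Σ‖`.
-/

section PosSemidef

open scoped Matrix

variable {n : Type*} [Fintype n] {S : Matrix n n ℝ}

theorem sq_dotProduct_mulVec_le_of_posSemidef (hS : S.PosSemidef) (v w : n → ℝ) :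
    (v ⬝ᵥ S *ᵥ w) ^ 2 ≤ (v ⬝ᵥ S *ᵥ v) * (w ⬝ᵥ S *ᵥ w) := by
  classical
  have symm : LinearMap.IsSymm (Matrix.toBilin' S) :=
    ⟨fun u z ↦ by
      simp only [Matrix.toBilin'_apply', RingHom.id_apply]
      rw [dotProduct_comm, ← Matrix.vecMul_transpose, ← Matrix.dotProduct_mulVec,
        ← Matrix.conjTranspose_eq_transpose_of_trivial, hS.isHermitian.eq]⟩
  have nonneg (u : n → ℝ) : 0 ≤ Matrix.toBilin' S u u := by
    simpa only [Matrix.toBilin'_apply', star_trivial] using hS.dotProduct_mulVec_nonneg u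
  simpa only [Matrix.toBilin'_apply'] using
    LinearMap.BilinForm.apply_sq_le_of_symm (Matrix.toBilin' S) nonneg symm v w

theorem sq_mulVec_apply_le_of_posSemidef (hS : S.PosSemidef) (w : n → ℝ) (i : n) :
    (S *ᵥ w) i ^ 2 ≤ S i i * (w ⬝ᵥ S *ᵥ w) := by
  classical
  simpa using sq_dotProduct_mulVec_le_of_posSemidef hS (Pi.single i 1) w

theorem sum_sq_apply_le_sq_trace_of_posSemidef (hS : S.PosSemidef) :
    ∑ i, ∑ j, S i j ^ 2 ≤ S.trace ^ 2 := by
  classical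
  have sq_apply_le (i j : n) : S i j ^ 2 ≤ S i i * S j j := by
    simpa using sq_mulVec_apply_le_of_posSemidef hS (Pi.single j 1) i
  calc ∑ i, ∑ j, S i j ^ 2
      ≤ ∑ i, ∑ j, S i i * S j j :=
        Finset.sum_le_sum fun i _ ↦ Finset.sum_le_sum fun j _ ↦ sq_apply_le i j
    _ = S.trace ^ 2 := by rw [sq, Matrix.trace, Finset.sum_mul_sum]; rfl

theorem mulVec_dotProduct_mulVec_le_trace_mul (hS : S.PosSemidef) (w : n → ℝ) :
    S *ᵥ w ⬝ᵥ S *ᵥ w ≤ S.trace * (w ⬝ᵥ S *ᵥ w) := by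
  calc S *ᵥ w ⬝ᵥ S *ᵥ w
      = ∑ i, (S *ᵥ w) i ^ 2 := by simp only [dotProduct, sq]
    _ ≤ ∑ i, S i i * (w ⬝ᵥ S *ᵥ w) :=
        Finset.sum_le_sum fun i _ ↦ sq_mulVec_apply_le_of_posSemidef hS w i
    _ = S.trace * (w ⬝ᵥ S *ᵥ w) := by rw [← Finset.sum_mul]; rfl

theorem dotProduct_self_le_trace_mul_dotProduct_inv_mulVec [DecidableEq n] (hS : S.PosDef)
    (v : n → ℝ) : v ⬝ᵥ v ≤ S.trace * (v ⬝ᵥ S⁻¹ *ᵥ v) := by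
  have mulVec_inv : S *ᵥ S⁻¹ *ᵥ v = v := by
    rw [Matrix.mulVec_mulVec, Matrix.mul_nonsing_inv S hS.det_pos.ne'.isUnit, Matrix.one_mulVec]
  simpa only [mulVec_inv, dotProduct_comm (S⁻¹ *ᵥ v)] using
    mulVec_dotProduct_mulVec_le_trace_mul hS.posSemidef (S⁻¹ *ᵥ v)

end PosSemidef

theorem pow_card_sub_one_mul_sum_le_card_mul_prod {ι R : Type*} [CommSemiring R] [PartialOrder R]
    [IsOrderedRing R] {s : Finset ι} {f : ι → R} {ξ : R} (hξ : 0 ≤ ξ) (hf : ∀ i ∈ s, ξ ≤ f i) :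
    ξ ^ (s.card - 1) * ∑ i ∈ s, f i ≤ s.card * ∏ i ∈ s, f i := by
  classical
  have term_le (i) (hi : i ∈ s) : ξ ^ (s.card - 1) * f i ≤ ∏ j ∈ s, f j := by
    calc ξ ^ (s.card - 1) * f i
        = (∏ _j ∈ s.erase i, ξ) * f i := by rw [Finset.prod_const, Finset.card_erase_of_mem hi]
      _ ≤ (∏ j ∈ s.erase i, f j) * f i := by
          refine mul_le_mul_of_nonneg_right ?_ (hξ.trans (hf i hi))
          exact Finset.prod_le_prod (fun _ _ ↦ hξ) fun j hj ↦ hf j (Finset.mem_of_mem_erase hj)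
      _ = ∏ j ∈ s, f j := Finset.prod_erase_mul s f hi
  calc ξ ^ (s.card - 1) * ∑ i ∈ s, f i
      = ∑ i ∈ s, ξ ^ (s.card - 1) * f i := Finset.mul_sum ..
    _ ≤ ∑ _i ∈ s, ∏ j ∈ s, f j := Finset.sum_le_sum term_le
    _ = s.card * ∏ i ∈ s, f i := by rw [Finset.sum_const, nsmul_eq_mul]

theorem posDef_of_posSemidef_sub_smul_one {n : Type*} [DecidableEq n] {S : Matrix n n ℝ} {ξ : ℝ}
    (hξ : 0 < ξ) (hSξ : (S - ξ • (1 : Matrix n n ℝ)).PosSemidef) : S.PosDef := by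
  simpa only [sub_add_cancel] using Matrix.PosDef.posSemidef_add hSξ (Matrix.PosDef.one.smul hξ)

section Eigenvalues

variable {n : Type*} [Fintype n] [DecidableEq n]

open scoped ComplexOrder MatrixOrder in
theorem le_eigenvalues_of_posSemidef_sub_smul_one {𝕜 : Type*} [RCLike 𝕜] {A : Matrix n n 𝕜}
    (hA : A.IsHermitian) {ξ : ℝ} (hAξ : (A - ξ • (1 : Matrix n n 𝕜)).PosSemidef) (i : n) :
    ξ ≤ hA.eigenvalues i := by
  have algebraMap_le : algebraMap ℝ (Matrix n n 𝕜) ξ ≤ A := by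
    rwa [Algebra.algebraMap_eq_smul_one, Matrix.le_iff]
  exact (algebraMap_le_iff_le_spectrum hA.isSelfAdjoint).mp algebraMap_le _
    (hA.eigenvalues_mem_spectrum_real i)

theorem pow_card_sub_one_mul_trace_le_card_mul_det {S : Matrix n n ℝ} (hS : S.IsHermitian) {ξ : ℝ}
    (hξ : 0 ≤ ξ) (h_eig : ∀ i, ξ ≤ hS.eigenvalues i) :
    ξ ^ (Fintype.card n - 1) * S.trace ≤ Fintype.card n * S.det := by
  rw [hS.trace_eq_sum_eigenvalues, hS.det_eq_prod_eigenvalues]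
  exact pow_card_sub_one_mul_sum_le_card_mul_prod hξ fun i _ ↦ h_eig i

end Eigenvalues

section GaussDensity

open scoped Matrix

variable {p : ℕ} {S : Matrix (Fin p) (Fin p) ℝ}

theorem matNorm_le_trace (hS : S.PosSemidef) : matNorm S ≤ S.trace :=
  Real.sqrt_le_iff.mpr ⟨hS.trace_nonneg, sum_sq_apply_le_sq_trace_of_posSemidef hS⟩

theorem gaussDensity_sq (x μ : Fin p → ℝ) (hS : 0 ≤ S.det) :
    gaussDensity x μ S ^ 2 =
      ((2 * π) ^ p * S.det * exp ((x - μ) ⬝ᵥ S⁻¹ *ᵥ (x - μ)))⁻¹ := by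
  have rpow_sq {a : ℝ} (ha : 0 ≤ a) (r : ℝ) : (a ^ (-r / 2)) ^ 2 = (a ^ r)⁻¹ := by
    rw [← Real.rpow_mul_natCast ha, Nat.cast_ofNat, div_mul_cancel₀ _ two_ne_zero,
      Real.rpow_neg ha]
  have exp_sq (q : ℝ) : exp (-q / 2) ^ 2 = (exp q)⁻¹ := by
    rw [← Real.exp_nat_mul, Nat.cast_ofNat, mul_div_cancel₀ _ two_ne_zero, Real.exp_neg]
  rw [gaussDensity, mul_pow, mul_pow, rpow_sq Real.two_pi_pos.le, rpow_sq hS, exp_sq,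
    Real.rpow_natCast, Real.rpow_one, mul_inv, mul_inv]

theorem gaussDensity_sq_mul_le (x μ : Fin p → ℝ) {ξ : ℝ} (hξ : 0 < ξ)
    (hSξ : (S - ξ • (1 : Matrix (Fin p) (Fin p) ℝ)).PosSemidef) :
    gaussDensity x μ S ^ 2 * (S.trace + (x - μ) ⬝ᵥ (x - μ)) ≤ p / ((2 * π) ^ p * ξ ^ (p - 1)) := by
  have hS : S.PosDef := posDef_of_posSemidef_sub_smul_one hξ hSξ
  have det_pos : 0 < S.det := hS.det_pos
  have trace_le : ξ ^ (p - 1) * S.trace ≤ p * S.det := by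
    simpa only [Fintype.card_fin] using pow_card_sub_one_mul_trace_le_card_mul_det hS.isHermitian
      hξ.le (le_eigenvalues_of_posSemidef_sub_smul_one hS.isHermitian hSξ)
  rw [gaussDensity_sq x μ det_pos.le]
  set q := (x - μ) ⬝ᵥ S⁻¹ *ᵥ (x - μ)
  have trace_add_le : S.trace + (x - μ) ⬝ᵥ (x - μ) ≤ S.trace * exp q := by
    calc S.trace + (x - μ) ⬝ᵥ (x - μ)
        ≤ S.trace + S.trace * q := by
          gcongr
          exact dotProduct_self_le_trace_mul_dotProduct_inv_mulVec hS (x - μ)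
      _ = S.trace * (q + 1) := by ring
      _ ≤ S.trace * exp q :=
          mul_le_mul_of_nonneg_left (Real.add_one_le_exp q) hS.posSemidef.trace_nonneg
  calc ((2 * π) ^ p * S.det * exp q)⁻¹ * (S.trace + (x - μ) ⬝ᵥ (x - μ))
      ≤ ((2 * π) ^ p * S.det * exp q)⁻¹ * (S.trace * exp q) := by gcongr
    _ = S.trace / ((2 * π) ^ p * S.det) := by field_simp
    _ ≤ p / ((2 * π) ^ p * ξ ^ (p - 1)) := by
        rw [div_le_div_iff₀ (by positivity) (by positivity)]
        calc S.trace * ((2 * π) ^ p * ξ ^ (p - 1))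
            = (2 * π) ^ p * (ξ ^ (p - 1) * S.trace) := by ring
          _ ≤ (2 * π) ^ p * (p * S.det) := by gcongr
          _ = p * ((2 * π) ^ p * S.det) := by ring

theorem norm_add_matNorm_le (x μ : EuclideanSpace ℝ (Fin p)) (hS : S.PosSemidef) :
    ‖μ‖ + matNorm S ≤ ‖x‖ + 1 + (S.trace + (x.ofLp - μ.ofLp) ⬝ᵥ (x.ofLp - μ.ofLp)) := by
  have dotProduct_eq : (x.ofLp - μ.ofLp) ⬝ᵥ (x.ofLp - μ.ofLp) = ‖x - μ‖ ^ 2 := by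
    rw [EuclideanSpace.real_norm_sq_eq]
    simp only [dotProduct, sq, PiLp.sub_apply, Pi.sub_apply]
  have norm_le : ‖μ‖ ≤ ‖x‖ + ‖x - μ‖ := norm_le_norm_add_norm_sub x μ
  have le_sq_add_one : ‖x - μ‖ ≤ ‖x - μ‖ ^ 2 + 1 := by nlinarith [sq_nonneg (‖x - μ‖ - 1)]
  linarith [matNorm_le_trace hS]

end GaussDensity

/-- Key claim in the compactification argument in the proof of Theorem 2 of the paper
(Gaussian case): on the constrained parameter space `H` of pairs `(μ,Σ)` with `Σ` positive
semidefinite and all eigenvalues at least `ξ`, the function `(μ,Σ) ↦ N(x|μ,Σ)` vanishes at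
infinity. -/
theorem statement14 (p : ℕ) (hp : 1 ≤ p) (x : EuclideanSpace ℝ (Fin p))
    (ξ : ℝ) (hξ : 0 < ξ) :
    ∀ ε > (0 : ℝ), ∃ R > (0 : ℝ),
      ∀ (μ : EuclideanSpace ℝ (Fin p)) (S : Matrix (Fin p) (Fin p) ℝ),
        S.PosSemidef → (S - ξ • (1 : Matrix (Fin p) (Fin p) ℝ)).PosSemidef →
        R ≤ ‖μ‖ + matNorm S → gaussDensity x μ S ≤ ε := by
  intro ε hε
  set K : ℝ := p / ((2 * π) ^ p * ξ ^ (p - 1))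
  refine ⟨‖x‖ + 1 + K / ε ^ 2, by positivity, fun μ S hS hSξ hR ↦ ?_⟩
  set m := S.trace + dotProduct (x.ofLp - μ.ofLp) (x.ofLp - μ.ofLp)
  have le_m : K / ε ^ 2 ≤ m := by linarith [norm_add_matNorm_le x μ hS]
  have K_pos : 0 < K := by positivity
  have m_pos : 0 < m := (div_pos K_pos (pow_pos hε 2)).trans_le le_m
  refine le_of_sq_le_sq ?_ hε.le
  exact le_of_mul_le_mul_right
    (calc gaussDensity x μ S ^ 2 * m
        ≤ K := gaussDensity_sq_mul_le x.ofLp μ.ofLp hξ hSξ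
      _ ≤ ε ^ 2 * m := (div_le_iff₀' (by positivity)).mp le_m) m_pos
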